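/- Let f ∈ R be homogeneous and suppose that τ(f^{1−1/p}) = m^j for some integer j ≥ 1. Then M_e − (n+1)p^e = −n − j for every e ≥ e_0. -/

import Mathlib

/-!
In characteristic `p`, with `q = p ^ e`, the ideal `m^{[e]}` is the monomial complete intersection
`(x_0 ^ q, …, x_n ^ q)`. The monomials outside it are the divisors of its socle monomial `x ^ t`,
where `t = (q - 1, …, q - 1)` has degree `N = (n + 1)(q - 1)`. A divisor `x ^ s` of `x ^ t` can be
multiplied by a monomial of degree `j` to give another divisor of `x ^ t` iff `deg s + j ≤ N`.
So a homogeneous polynomial outside `m^{[e]}` lies in `m^{[e]} : m ^ j` iff its degree exceeds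
`N - j`, and for `j ≥ 1` the least such degree is `N - j + 1`. Applied to the polynomial `1`, the
same criterion says that `m ^ j ⊄ m^{[e]}` iff `j ≤ N`, which is what `e ≥ e_0` provides.
-/

open MvPolynomial

noncomputable section

/-- `I^{[e]}`-style bracket power: the ideal generated by `q`-th powers of elements of `I`. -/
def bracketPow {A : Type*} [CommRing A] (I : Ideal A) (q : ℕ) : Ideal A :=
  Ideal.span ((fun u => u ^ q) '' (I : Set A))

/-- The test ideal `τ(f^{1 - 1/p^e})`: the smallest ideal `a` with `f^{p^e - 1} ∈ a^{[e]}`. -/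
def testIdeal {A : Type*} [CommRing A] (p : ℕ) (f : A) (e : ℕ) : Ideal A :=
  sInf {a : Ideal A | f ^ (p ^ e - 1) ∈ bracketPow a (p ^ e)}

/-- The homogeneous maximal ideal `m = (x_0, ..., x_n)`. -/
def mxI (k : Type*) [Field k] (n : ℕ) : Ideal (MvPolynomial (Fin (n + 1)) k) :=
  Ideal.span (Set.range (X : Fin (n + 1) → MvPolynomial (Fin (n + 1)) k))

/-- The set of degrees of homogeneous elements of `(m^{[e]} : τ) \ m^{[e]}`. -/
def MeSet (k : Type*) [Field k] (n p : ℕ) (τ : Ideal (MvPolynomial (Fin (n + 1)) k))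
    (e : ℕ) : Set ℕ :=
  {d : ℕ | ∃ g : MvPolynomial (Fin (n + 1)) k,
    g ∈ (bracketPow (mxI k n) (p ^ e)).colon τ ∧
    g ∉ bracketPow (mxI k n) (p ^ e) ∧ g.IsHomogeneous d}

/-- `M_e`: the minimal degree of a homogeneous element of `(m^{[e]} : τ) \ m^{[e]}`. -/
def Me (k : Type*) [Field k] (n p : ℕ) (τ : Ideal (MvPolynomial (Fin (n + 1)) k))
    (e : ℕ) : ℕ :=
  sInf (MeSet k n p τ e)

/-- `e_0`: the least `e` with `τ ⊄ m^{[e]}`. -/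
def e0 (k : Type*) [Field k] (n p : ℕ) (τ : Ideal (MvPolynomial (Fin (n + 1)) k)) : ℕ :=
  sInf {e : ℕ | ¬ τ ≤ bracketPow (mxI k n) (p ^ e)}

section BracketPow

variable {A : Type*} [CommRing A] (p : ℕ) [ExpChar A p]

lemma bracketPow_eq_map_iterateFrobenius (I : Ideal A) (e : ℕ) :
    bracketPow I (p ^ e) = I.map (iterateFrobenius A p e) :=
  rfl

lemma bracketPow_span (S : Set A) (e : ℕ) :
    bracketPow (Ideal.span S) (p ^ e) = Ideal.span ((fun u => u ^ p ^ e) '' S) := by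
  rw [bracketPow_eq_map_iterateFrobenius, Ideal.map_span]
  rfl

end BracketPow

lemma exists_degree_eq_and_add_le_iff {σ : Type*} {s t : σ →₀ ℕ} (hst : s ≤ t) {j : ℕ} :
    (∃ u : σ →₀ ℕ, u.degree = j ∧ s + u ≤ t) ↔ s.degree + j ≤ t.degree := by
  constructor
  · rintro ⟨u, rfl, hu⟩
    simpa only [map_add] using Finsupp.degree_mono hu
  · intro hj
    have hdeg : s.degree + (t - s).degree = t.degree := by
      rw [← map_add, add_tsub_cancel_of_le hst]
    obtain ⟨u, hu, huj⟩ := Finsupp.exists_le_degree_eq (t - s) j (by lia)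
    exact ⟨u, huj, (le_tsub_iff_left hst).mp hu⟩

section MonomialCompleteIntersection

variable {σ R : Type*} [CommSemiring R] {t : σ →₀ ℕ} {j : ℕ}

variable (R) in
/-- The monomial complete intersection `(x_i ^ (t_i + 1))_i`. It is indexed by the exponent `t` of
the monomial spanning the socle of its quotient, which avoids the subtraction `q - 1`. -/
def monomialCompleteIntersection (t : σ →₀ ℕ) : Ideal (MvPolynomial σ R) :=
  Ideal.span (Set.range fun i => X i ^ (t i + 1))

lemma mem_monomialCompleteIntersection_iff {g : MvPolynomial σ R} :
    g ∈ monomialCompleteIntersection R t ↔ ∀ s ∈ g.support, ¬ s ≤ t := by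
  have hspan : monomialCompleteIntersection R t =
      Ideal.span ((fun s => monomial s (1 : R)) ''
        Set.range fun i => Finsupp.single i (t i + 1)) := by
    simp only [monomialCompleteIntersection, X_pow_eq_monomial, ← Set.range_comp,
      Function.comp_def]
  rw [hspan, mem_ideal_span_monomial_image]
  simp only [Set.exists_range_iff, Finsupp.single_le_iff, Nat.succ_le_iff]
  simp only [Finsupp.le_def, not_forall, not_le]

lemma monomial_mem_monomialCompleteIntersection_iff [Nontrivial R] {s : σ →₀ ℕ} :
    monomial s (1 : R) ∈ monomialCompleteIntersection R t ↔ ¬ s ≤ t := by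
  classical
  simp [mem_monomialCompleteIntersection_iff, support_monomial]

lemma mul_monomial_mem_monomialCompleteIntersection_iff {g : MvPolynomial σ R} {u : σ →₀ ℕ} :
    g * monomial u 1 ∈ monomialCompleteIntersection R t ↔ ∀ s ∈ g.support, ¬ s + u ≤ t := by
  rw [mem_monomialCompleteIntersection_iff]
  constructor
  · intro h s hs
    exact h (s + u) (by simpa using hs)
  · intro h v hv hvt
    rw [mem_support_iff, coeff_mul_monomial', mul_one, ne_eq, ite_eq_right_iff,
      Classical.not_imp] at hv
    obtain ⟨huv, hv⟩ := hv
    exact h (v - u) (mem_support_iff.mpr hv) (by rwa [tsub_add_cancel_of_le huv])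

lemma mem_colon_idealOfVars_pow_iff {g : MvPolynomial σ R} :
    g ∈ (monomialCompleteIntersection R t).colon ↑(idealOfVars σ R ^ j) ↔
      ∀ s ∈ g.support, s ≤ t → t.degree < s.degree + j := by
  have hcolon : g ∈ (monomialCompleteIntersection R t).colon ↑(idealOfVars σ R ^ j) ↔
      ∀ u : σ →₀ ℕ, u.degree = j → ∀ s ∈ g.support, ¬ s + u ≤ t := by
    rw [pow_idealOfVars_eq_span, Ideal.colon_span, Submodule.mem_colon]
    simp [mul_monomial_mem_monomialCompleteIntersection_iff]
  rw [hcolon]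
  constructor
  · intro h s hs hst
    rw [← not_le, ← exists_degree_eq_and_add_le_iff hst]
    rintro ⟨u, huj, hu⟩
    exact h u huj s hs hu
  · intro h u huj s hs hu
    have hst : s ≤ t := le_self_add.trans hu
    exact (h s hs hst).not_ge ((exists_degree_eq_and_add_le_iff hst).mp ⟨u, huj, hu⟩)

lemma idealOfVars_pow_le_monomialCompleteIntersection_iff [Nontrivial R] :
    idealOfVars σ R ^ j ≤ monomialCompleteIntersection R t ↔ t.degree < j := by
  rw [← SetLike.coe_subset_coe, ← Submodule.colon_eq_top_iff_subset, Ideal.eq_top_iff_one,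
    mem_colon_idealOfVars_pow_iff]
  simp

lemma exists_isHomogeneous_mem_colon_diff_iff [Nontrivial R] {d : ℕ} :
    (∃ g, g ∈ (monomialCompleteIntersection R t).colon ↑(idealOfVars σ R ^ j) ∧
      g ∉ monomialCompleteIntersection R t ∧ g.IsHomogeneous d) ↔
      d ∈ Set.Icc (t.degree + 1 - j) t.degree := by
  rw [Set.mem_Icc, tsub_le_iff_right, Nat.succ_le_iff]
  constructor
  · rintro ⟨g, hcolon, hmem, hg⟩
    obtain ⟨s, hs, hst⟩ : ∃ s ∈ g.support, s ≤ t := by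
      simpa [mem_monomialCompleteIntersection_iff] using hmem
    have hsd : s.degree = d := of_not_not fun h => mem_support_iff.mp hs (hg.coeff_eq_zero h)
    exact hsd ▸ ⟨mem_colon_idealOfVars_pow_iff.mp hcolon s hs hst, Finsupp.degree_mono hst⟩
  · rintro ⟨hlow, hup⟩
    obtain ⟨s, hst, rfl⟩ := Finsupp.exists_le_degree_eq t d hup
    refine ⟨monomial s 1, mem_colon_idealOfVars_pow_iff.mpr fun v hv _ => ?_,
      fun h => monomial_mem_monomialCompleteIntersection_iff.mp h hst,
      isHomogeneous_monomial 1 rfl⟩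
    rwa [Finset.mem_singleton.mp (support_monomial_subset hv)]

end MonomialCompleteIntersection

/-- The exponent `(q - 1, …, q - 1)` of the socle monomial modulo `(x_i ^ q)_i`, for `q > 0`. -/
def socleExponent (σ : Type*) [Finite σ] (q : ℕ) : σ →₀ ℕ :=
  Finsupp.equivFunOnFinite.symm fun _ => q - 1

lemma degree_socleExponent (σ : Type*) [Fintype σ] (q : ℕ) :
    (socleExponent σ q).degree = Fintype.card σ * (q - 1) := by
  simp [socleExponent, Finsupp.degree_eq_sum]

lemma bracketPow_idealOfVars (σ R : Type*) [Finite σ] [CommRing R] (p : ℕ) [ExpChar R p] (e : ℕ) :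
    bracketPow (idealOfVars σ R) (p ^ e) =
      monomialCompleteIntersection R (socleExponent σ (p ^ e)) := by
  have hq : p ^ e - 1 + 1 = p ^ e := Nat.sub_add_cancel (expChar_pow_pos R p e)
  rw [bracketPow_span, ← Set.range_comp]
  simp only [monomialCompleteIntersection, socleExponent, Finsupp.equivFunOnFinite_symm_apply_apply,
    hq, Function.comp_def]

section MaximalIdeal

variable {k : Type*} [Field k] {p n : ℕ} {j e : ℕ}

lemma mxI_pow_le_bracketPow_iff [ExpChar k p] :
    mxI k n ^ j ≤ bracketPow (mxI k n) (p ^ e) ↔ (n + 1) * (p ^ e - 1) < j := by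
  rw [mxI, bracketPow_idealOfVars, idealOfVars_pow_le_monomialCompleteIntersection_iff,
    degree_socleExponent, Fintype.card_fin]

lemma MeSet_mxI_pow [ExpChar k p] :
    MeSet k n p (mxI k n ^ j) e =
      Set.Icc ((n + 1) * (p ^ e - 1) + 1 - j) ((n + 1) * (p ^ e - 1)) := by
  ext d
  rw [MeSet, mxI, bracketPow_idealOfVars, Set.mem_ofPred_eq,
    exists_isHomogeneous_mem_colon_diff_iff, degree_socleExponent, Fintype.card_fin]

lemma Me_mxI_pow [ExpChar k p] (hj : 1 ≤ j) :
    Me k n p (mxI k n ^ j) e = (n + 1) * (p ^ e - 1) + 1 - j := by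
  rw [Me, MeSet_mxI_pow, csInf_Icc (by lia)]

lemma le_of_e0_mxI_pow_le [hp : Fact p.Prime] [CharP k p] (he : e0 k n p (mxI k n ^ j) ≤ e) :
    j ≤ (n + 1) * (p ^ e - 1) := by
  have hset : {a : ℕ | ¬ mxI k n ^ j ≤ bracketPow (mxI k n) (p ^ a)} =
      {a : ℕ | j ≤ (n + 1) * (p ^ a - 1)} := by
    simp only [mxI_pow_le_bracketPow_iff, not_lt]
  have hne : {a : ℕ | j ≤ (n + 1) * (p ^ a - 1)}.Nonempty :=
    ⟨j, (Nat.le_sub_one_of_lt (Nat.lt_pow_self hp.out.one_lt)).trans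
      (Nat.le_mul_of_pos_left _ n.succ_pos)⟩
  rw [e0, hset] at he
  calc j ≤ (n + 1) * (p ^ sInf {a : ℕ | j ≤ (n + 1) * (p ^ a - 1)} - 1) := Nat.sInf_mem hne
    _ ≤ (n + 1) * (p ^ e - 1) := by gcongr; exact hp.out.one_le

end MaximalIdeal

theorem Me_sub_eq_of_testIdeal_eq_pow_general {k : Type*} [Field k] {p n : ℕ}
    [Fact p.Prime] [CharP k p] {τ : Ideal (MvPolynomial (Fin (n + 1)) k)} {j : ℕ} (hj : 1 ≤ j)
    (hτ : τ = mxI k n ^ j) {e : ℕ} (he : e0 k n p τ ≤ e) :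
    (Me k n p τ e : ℤ) - (n + 1) * p ^ e = -n - j := by
  subst hτ
  have hje : j ≤ (n + 1) * (p ^ e - 1) := le_of_e0_mxI_pow_le he
  have hq : 1 ≤ p ^ e := Nat.one_le_pow _ _ (Fact.out : p.Prime).pos
  rw [Me_mxI_pow hj, Nat.cast_sub (by lia)]
  push_cast [hq]
  ring

/-- If `f` is homogeneous and `τ(f^{1−1/p}) = m^j` for some `j ≥ 1`,
then `M_e − (n+1)p^e = −n − j` for every `e ≥ e_0`. -/
theorem Me_sub_eq_of_testIdeal_eq_pow {k : Type*} [Field k] {p n : ℕ}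
    [Fact p.Prime] [CharP k p]
    (f : MvPolynomial (Fin (n + 1)) k) (d : ℕ) (hf : f.IsHomogeneous d)
    (j : ℕ) (hj : 1 ≤ j) (hτ : testIdeal p f 1 = (mxI k n) ^ j)
    (e : ℕ) (he : e0 k n p (testIdeal p f 1) ≤ e) :
    (Me k n p (testIdeal p f 1) e : ℤ) - (n + 1) * p ^ e = -n - j := by
  exact Me_sub_eq_of_testIdeal_eq_pow_general hj hτ he

end
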